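/- Consider the two-player linear system ẋ = A x + B_i u_i + B_j u_j, x(0) = x₀, with costs J_k(u_k, u_{−k}) = ∫₀^∞ (xᵀ Q_k x + u_kᵀ u_k) dt for k ∈ {i, j}, where Q_i, Q_j are symmetric positive semidefinite. Suppose P_i, P_j are symmetric matrices solving the coupled algebraic Riccati equations 0 = (A − B_j B_jᵀ P_j)ᵀ P_i + P_i (A − B_j B_jᵀ P_j) − P_i B_i B_iᵀ P_i + Q_i and 0 = (A − B_i B_iᵀ P_i)ᵀ P_j + P_j (A − B_i B_iᵀ P_i) − P_j B_j B_jᵀ P_j + Q_j, and that the closed-loop matrix A − B_i B_iᵀ P_i − B_j B_jᵀ P_j is Hurwitz. Then the feedback policies u_k*(t) = −B_kᵀ P_k x(t) form a Nash equilibrium among asymptotically vanishing responses: for each k ∈ {i, j} and every continuous control u_k whose state trajectory under ẋ = A x + B_k u_k + B_{−k} u_{−k}*, x(0) = x₀, converges to 0 with convergent cost integrals, J_k(u_k, u_{−k}*) ≥ J_k(u_k*, u_{−k}*) = x₀ᵀ P_k x₀. -/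

import Mathlib

open Matrix MeasureTheory Filter

/-- A real square matrix is Hurwitz if every eigenvalue (over ℂ) has strictly
negative real part. -/
def IsHurwitz {n : ℕ} (A : Matrix (Fin n) (Fin n) ℝ) : Prop :=
  ∀ μ ∈ spectrum ℂ (A.map (algebraMap ℝ ℂ)), μ.re < 0

/-!
The value function `V x = xᵀ P_k x` satisfies, along any trajectory of player `k`'s deviation
problem, `V' = ‖u_k - u_k*‖² - (xᵀ Q_k x + ‖u_k‖²)`: this is the Riccati equation after completing
the square. Integrating over `[0, ∞)` bounds the cost below by `V x₀`, with equality for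
`u_k = u_k*`.

The closed-loop state decays exponentially because each root of the characteristic polynomial
can be split off as a scalar equation `y' = l y + g`, whose forcing `g` is annihilated by the
remaining factors.
-/

section LinearODE

variable {E : Type*} [NormedAddCommGroup E] [NormedSpace ℂ E]

theorem hasDerivAt_exp_neg_mul_smul {l : ℂ} {y : ℝ → E} {v : E} {t : ℝ}
    (hy : HasDerivAt y (l • y t + v) t) :
    HasDerivAt (fun s : ℝ ↦ Complex.exp (-l * s) • y s) (Complex.exp (-l * t) • v) t := by
  have hlin : HasDerivAt (fun s : ℝ ↦ -l * (s : ℂ)) (-l) t := by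
    simpa using (Complex.ofRealCLM.hasDerivAt (x := t)).const_mul (-l)
  refine (hlin.cexp.smul hy).congr_deriv ?_
  module

theorem norm_exp_mul_ofReal (l : ℂ) (t : ℝ) :
    ‖Complex.exp (l * t)‖ = Real.exp (l.re * t) := by
  simp [Complex.norm_exp]

theorem norm_le_mul_exp_of_hasDerivAt_smul_add {l : ℂ} {r C : ℝ} (hl : l.re < r) {y g : ℝ → E}
    (hy : ∀ t, 0 ≤ t → HasDerivAt y (l • y t + g t) t)
    (hg : ∀ t, 0 ≤ t → ‖g t‖ ≤ C * Real.exp (r * t)) {t : ℝ} (ht : 0 ≤ t) :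
    ‖y t‖ ≤ (‖y 0‖ + C / (r - l.re)) * Real.exp (r * t) := by
  set b := r - l.re with hb
  have b_pos : 0 < b := sub_pos.2 hl
  have C_nonneg : 0 ≤ C := by simpa using (norm_nonneg _).trans (hg 0 le_rfl)
  have hderiv (s : ℝ) (hs : 0 ≤ s) := hasDerivAt_exp_neg_mul_smul (hy s hs)
  have hbound (s : ℝ) : HasDerivAt (fun s ↦ ‖y 0‖ + C / b * (Real.exp (b * s) - 1))
      (C * Real.exp (b * s)) s := by
    have hexp : HasDerivAt (fun s ↦ Real.exp (b * s)) (Real.exp (b * s) * b) s := by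
      simpa using ((hasDerivAt_id s).const_mul b).exp
    refine (((hexp.sub_const 1).const_mul (C / b)).const_add _).congr_deriv ?_
    field_simp
  have hrescaled : ‖Complex.exp (-l * t) • y t‖ ≤ ‖y 0‖ + C / b * (Real.exp (b * t) - 1) := by
    refine image_norm_le_of_norm_deriv_right_le_deriv_boundary
      (fun s hs ↦ (hderiv s hs.1).continuousAt.continuousWithinAt)
      (fun s hs ↦ (hderiv s hs.1).hasDerivWithinAt) (by simp) hbound (fun s hs ↦ ?_) ⟨ht, le_rfl⟩
    calc ‖Complex.exp (-l * s) • g s‖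
        ≤ Real.exp (-l.re * s) * (C * Real.exp (r * s)) := by
          rw [norm_smul, norm_exp_mul_ofReal, Complex.neg_re]
          gcongr
          exact hg s hs.1
      _ = C * Real.exp (b * s) := by
          rw [mul_left_comm, ← Real.exp_add, ← add_mul, hb, neg_add_eq_sub]
  have one_le_exp : 1 ≤ Real.exp (b * t) := Real.one_le_exp (by positivity)
  calc ‖y t‖ = Real.exp (l.re * t) * ‖Complex.exp (-l * t) • y t‖ := by
        rw [norm_smul, norm_exp_mul_ofReal, ← mul_assoc, ← Real.exp_add]
        simp
    _ ≤ Real.exp (l.re * t) * ((‖y 0‖ + C / b) * Real.exp (b * t)) := by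
        gcongr
        refine hrescaled.trans ?_
        have := le_mul_of_one_le_right (norm_nonneg (y 0)) one_le_exp
        have := div_nonneg C_nonneg b_pos.le
        linarith
    _ = (‖y 0‖ + C / b) * Real.exp (r * t) := by
        rw [mul_left_comm, ← Real.exp_add, ← add_mul, hb, add_sub_cancel]

open Polynomial in
theorem exists_norm_le_mul_exp_of_prod_X_sub_C {T : E →L[ℂ] E} {r : ℝ} {s : Multiset ℂ}
    (hs : ∀ a ∈ s, a.re < r) {z : ℝ → E} (hz : ∀ t, 0 ≤ t → HasDerivAt z (T (z t)) t)
    (hann : ∀ t, 0 ≤ t → aeval T (s.map (X - C ·)).prod (z t) = 0) :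
    ∃ K, ∀ t, 0 ≤ t → ‖z t‖ ≤ K * Real.exp (r * t) := by
  induction s using Multiset.induction_on generalizing z with
  | empty => exact ⟨0, fun t ht ↦ by simpa using hann t ht⟩
  | cons a s ih =>
    set S : E →L[ℂ] E := T - algebraMap ℂ (E →L[ℂ] E) a with hS
    have hTS (v : E) : T v = a • v + S v := by simp [hS, Algebra.algebraMap_eq_smul_one]
    obtain ⟨K, hK⟩ : ∃ K, ∀ t, 0 ≤ t → ‖S (z t)‖ ≤ K * Real.exp (r * t) := by
      refine ih (fun b hb ↦ hs b (Multiset.mem_cons_of_mem hb)) (fun t ht ↦ ?_) fun t ht ↦ ?_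
      · refine ((S.restrictScalars ℝ).hasFDerivAt.comp_hasDerivAt t (hz t ht)).congr_deriv ?_
        simp [hTS]
      · have := hann t ht
        rwa [Multiset.map_cons, Multiset.prod_cons, mul_comm, map_mul, map_sub, aeval_X,
          aeval_C] at this
    exact ⟨_, fun t ht ↦ norm_le_mul_exp_of_hasDerivAt_smul_add (hs a (Multiset.mem_cons_self a s))
      (fun τ hτ ↦ hTS (z τ) ▸ hz τ hτ) hK ht⟩

theorem exists_norm_le_mul_exp_of_spectrum {ι : Type*} [Fintype ι] [DecidableEq ι]
    {M : Matrix ι ι ℂ} {r : ℝ} (hM : ∀ μ ∈ spectrum ℂ M, μ.re < r) {z : ℝ → ι → ℂ}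
    (hz : ∀ t, 0 ≤ t → HasDerivAt z (M *ᵥ z t) t) :
    ∃ K, ∀ t, 0 ≤ t → ‖z t‖ ≤ K * Real.exp (r * t) := by
  let toCLM := toLinAlgEquiv'.trans (Module.End.toContinuousLinearMap (𝕜 := ℂ) (ι → ℂ))
  refine exists_norm_le_mul_exp_of_prod_X_sub_C (T := toCLM M) (s := M.charpoly.roots)
    (fun a ha ↦ hM a ?_) hz fun t _ ↦ ?_
  · exact mem_spectrum_iff_isRoot_charpoly.2 (Polynomial.isRoot_of_mem_roots ha)
  · rw [← (IsAlgClosed.splits _).eq_prod_roots_of_monic M.charpoly_monic,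
      Polynomial.aeval_algHom_apply, aeval_self_charpoly, map_zero, _root_.zero_apply]

theorem IsHurwitz.exists_neg_forall_re_lt {n : ℕ} {M : Matrix (Fin n) (Fin n) ℝ}
    (hM : IsHurwitz M) : ∃ r < 0, ∀ μ ∈ spectrum ℂ (M.map (algebraMap ℝ ℂ)), μ.re < r := by
  have hsep : ∀ᶠ r in nhdsWithin (0 : ℝ) (Set.Iio 0),
      ∀ μ ∈ spectrum ℂ (M.map (algebraMap ℝ ℂ)), μ.re < r :=
    (eventually_all_finite (finite_spectrum _)).2 fun μ hμ ↦
      eventually_nhdsWithin_of_eventually_nhds (eventually_gt_nhds (hM μ hμ))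
  exact (eventually_mem_nhdsWithin.and hsep).exists

theorem IsHurwitz.exists_isBigO_exp_neg {n : ℕ} {M : Matrix (Fin n) (Fin n) ℝ} (hM : IsHurwitz M)
    {x : ℝ → Fin n → ℝ} (hx : ∀ t, 0 ≤ t → HasDerivAt x (M *ᵥ x t) t) :
    ∃ b > 0, x =O[atTop] fun t ↦ Real.exp (-b * t) := by
  obtain ⟨r, hr, hMr⟩ := hM.exists_neg_forall_re_lt
  have hcomplex (t : ℝ) (ht : 0 ≤ t) : HasDerivAt (fun s k ↦ (x s k : ℂ))
      (M.map (algebraMap ℝ ℂ) *ᵥ fun k ↦ (x t k : ℂ)) t := by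
    refine hasDerivAt_pi.2 fun k ↦ (hasDerivAt_pi.1 (hx t ht) k).ofReal_comp.congr_deriv ?_
    simp [mulVec, dotProduct]
  obtain ⟨K, hK⟩ := exists_norm_le_mul_exp_of_spectrum hMr hcomplex
  refine ⟨-r, neg_pos.2 hr, .of_bound K ?_⟩
  filter_upwards [eventually_ge_atTop 0] with t ht
  simpa [Pi.norm_def] using hK t ht

end LinearODE

section Calculus

variable {ι κ : Type*} [Fintype ι] [Fintype κ]

theorem hasDerivAt_mulVec {κ : Type*} [Finite κ] (M : Matrix κ ι ℝ) {x : ℝ → ι → ℝ}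
    {x' : ι → ℝ} {t : ℝ} (hx : HasDerivAt x x' t) :
    HasDerivAt (fun s ↦ M *ᵥ x s) (M *ᵥ x') t := by
  have := Fintype.ofFinite κ
  exact M.mulVecLin.toContinuousLinearMap.hasFDerivAt.comp_hasDerivAt t hx

theorem hasDerivAt_dotProduct {x y : ℝ → ι → ℝ} {x' y' : ι → ℝ} {t : ℝ}
    (hx : HasDerivAt x x' t) (hy : HasDerivAt y y' t) :
    HasDerivAt (fun s ↦ x s ⬝ᵥ y s) (x' ⬝ᵥ y t + x t ⬝ᵥ y') t := by
  simp only [dotProduct, ← Finset.sum_add_distrib]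
  exact .fun_sum fun k _ ↦ (hasDerivAt_pi.1 hx k).mul (hasDerivAt_pi.1 hy k)

theorem isBigO_mulVec {α : Type*} {l : Filter α} {x : α → ι → ℝ} {g : α → ℝ} (M : Matrix κ ι ℝ)
    (hx : x =O[l] g) : (fun a ↦ M *ᵥ x a) =O[l] g :=
  (M.mulVecLin.toContinuousLinearMap.isBigO_comp x l).trans hx

theorem isBigO_dotProduct {α : Type*} {l : Filter α} {x y : α → ι → ℝ} {f g : α → ℝ}
    (hx : x =O[l] f) (hy : y =O[l] g) :
    (fun a ↦ x a ⬝ᵥ y a) =O[l] fun a ↦ f a * g a :=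
  .fun_sum fun k _ ↦ (Asymptotics.isBigO_pi.1 hx k).mul (Asymptotics.isBigO_pi.1 hy k)

theorem tendsto_dotProduct_mulVec_self (P : Matrix ι ι ℝ) {x : ℝ → ι → ℝ}
    (hx : Tendsto x atTop (nhds 0)) : Tendsto (fun t ↦ x t ⬝ᵥ P *ᵥ x t) atTop (nhds 0) := by
  have hcont : Continuous fun v : ι → ℝ ↦ v ⬝ᵥ P *ᵥ v := by fun_prop
  exact (hcont.tendsto' 0 0 (by simp)).comp hx

theorem sub_le_integral_Ioi_of_hasDerivAt_of_le {f f' φ : ℝ → ℝ} {a l : ℝ}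
    (hcont : ContinuousOn f (Set.Ici a)) (hderiv : ∀ t ∈ Set.Ioi a, HasDerivAt f (f' t) t)
    (hle : ∀ t ∈ Set.Ioi a, f' t ≤ φ t) (hφ : IntegrableOn φ (Set.Ioi a))
    (hlim : Tendsto f atTop (nhds l)) : l - f a ≤ ∫ t in Set.Ioi a, φ t := by
  refine le_of_tendsto_of_tendsto (hlim.sub_const (f a))
    (intervalIntegral_tendsto_integral_Ioi a hφ tendsto_id) ?_
  filter_upwards [eventually_ge_atTop a] with T hT
  exact intervalIntegral.sub_le_integral_of_hasDeriv_right_of_le hT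
    (hcont.mono Set.Icc_subset_Ici_self) (fun t ht ↦ (hderiv t ht.1).hasDerivWithinAt)
    ((integrableOn_Icc_iff_integrableOn_Ioc (by simp)).2 (hφ.mono_set Set.Ioc_subset_Ioi_self))
    fun t ht ↦ hle t ht.1

end Calculus

section Riccati

variable {R ι κ : Type*} [CommRing R] [Fintype ι] [Fintype κ]

/-- The integrand `xᵀ Q x + uᵀ u` of a player's cost, with control weight the identity. -/
def runningCost (Q : Matrix ι ι R) (x : ι → R) (u : κ → R) : R :=
  x ⬝ᵥ Q *ᵥ x + u ⬝ᵥ u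

/-- The linear feedback policy `-Bᵀ P x` attached to a candidate value matrix `P`. -/
def riccatiFeedback (B : Matrix ι κ R) (P : Matrix ι ι R) (x : ι → R) : κ → R :=
  -(Bᵀ *ᵥ (P *ᵥ x))

/-- `P` is a symmetric solution of the algebraic Riccati equation of the single-player problem
with drift `K`, input matrix `B` and state weight `Q`. In the game, `K` is the drift left once the
opponent's feedback is substituted. -/
structure IsRiccatiSolution (K : Matrix ι ι R) (B : Matrix ι κ R) (Q P : Matrix ι ι R) : Prop where
  isSymm : Pᵀ = P
  riccati : 0 = Kᵀ * P + P * K - P * B * Bᵀ * P + Q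

theorem sub_mulVec_eq_add_riccatiFeedback (K P : Matrix ι ι R) (B : Matrix ι κ R) (x : ι → R) :
    (K - B * Bᵀ * P) *ᵥ x = K *ᵥ x + B *ᵥ riccatiFeedback B P x := by
  rw [riccatiFeedback, sub_mulVec, mulVec_neg, ← mulVec_mulVec, ← mulVec_mulVec, sub_eq_add_neg]

namespace IsRiccatiSolution

theorem completion_of_squares {K Q P : Matrix ι ι R} {B : Matrix ι κ R}
    (h : IsRiccatiSolution K B Q P) (x : ι → R) (u : κ → R) :
    (K *ᵥ x + B *ᵥ u) ⬝ᵥ P *ᵥ x + x ⬝ᵥ P *ᵥ (K *ᵥ x + B *ᵥ u) =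
      (u - riccatiFeedback B P x) ⬝ᵥ (u - riccatiFeedback B P x) - runningCost Q x u := by
  have P_symm (v w : ι → R) : v ⬝ᵥ P *ᵥ w = (P *ᵥ v) ⬝ᵥ w := by
    rw [dotProduct_mulVec, ← mulVec_transpose, h.isSymm]
  have B_adjoint (v : ι → R) (w : κ → R) : v ⬝ᵥ B *ᵥ w = (Bᵀ *ᵥ v) ⬝ᵥ w := by
    rw [dotProduct_mulVec, ← mulVec_transpose]
  have K_adjoint (v w : ι → R) : v ⬝ᵥ Kᵀ *ᵥ w = (K *ᵥ v) ⬝ᵥ w := by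
    rw [dotProduct_mulVec, vecMul_transpose]
  set w := Bᵀ *ᵥ (P *ᵥ x) with hw
  have riccati_at_x : 0 = (K *ᵥ x) ⬝ᵥ P *ᵥ x + x ⬝ᵥ P *ᵥ (K *ᵥ x) - w ⬝ᵥ w + x ⬝ᵥ Q *ᵥ x := by
    have := congrArg (fun S ↦ x ⬝ᵥ S *ᵥ x) h.riccati
    simpa only [zero_mulVec, dotProduct_zero, add_mulVec, sub_mulVec, dotProduct_add,
      dotProduct_sub, ← mulVec_mulVec, K_adjoint, P_symm x (B *ᵥ _), B_adjoint, ← hw] using this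
  have cross_left : (B *ᵥ u) ⬝ᵥ P *ᵥ x = w ⬝ᵥ u := by rw [dotProduct_comm, B_adjoint]
  have cross_right : x ⬝ᵥ P *ᵥ (B *ᵥ u) = w ⬝ᵥ u := by rw [P_symm, B_adjoint]
  simp only [runningCost, riccatiFeedback, ← hw, sub_neg_eq_add, mulVec_add, dotProduct_add,
    add_dotProduct, cross_left, cross_right, dotProduct_comm u w]
  linear_combination -riccati_at_x

variable {K Q P : Matrix ι ι ℝ} {B : Matrix ι κ ℝ}

theorem hasDerivAt_neg_value (h : IsRiccatiSolution K B Q P) {x : ℝ → ι → ℝ} {u : κ → ℝ} {t : ℝ}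
    (hx : HasDerivAt x (K *ᵥ x t + B *ᵥ u) t) :
    HasDerivAt (fun s ↦ -(x s ⬝ᵥ P *ᵥ x s)) (runningCost Q (x t) u -
      (u - riccatiFeedback B P (x t)) ⬝ᵥ (u - riccatiFeedback B P (x t))) t := by
  refine (hasDerivAt_dotProduct hx (hasDerivAt_mulVec P hx)).fun_neg.congr_deriv ?_
  rw [h.completion_of_squares, neg_sub]

theorem le_integral_runningCost (h : IsRiccatiSolution K B Q P) {u : ℝ → κ → ℝ} {x : ℝ → ι → ℝ}
    (hx : ∀ t, 0 ≤ t → HasDerivAt x (K *ᵥ x t + B *ᵥ u t) t) (hlim : Tendsto x atTop (nhds 0))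
    (hint : IntegrableOn (fun t ↦ runningCost Q (x t) (u t)) (Set.Ioi 0)) :
    x 0 ⬝ᵥ P *ᵥ x 0 ≤ ∫ t in Set.Ioi 0, runningCost Q (x t) (u t) := by
  have hderiv (t : ℝ) (ht : 0 ≤ t) := h.hasDerivAt_neg_value (hx t ht)
  have hle := sub_le_integral_Ioi_of_hasDerivAt_of_le
    (fun t ht ↦ (hderiv t ht).continuousAt.continuousWithinAt)
    (fun t ht ↦ hderiv t (le_of_lt ht))
    (fun t _ ↦ sub_le_self _ (dotProduct_star_self_nonneg (_ : κ → ℝ))) hint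
    (tendsto_dotProduct_mulVec_self P hlim).neg
  simpa using hle

theorem integral_runningCost_riccatiFeedback (h : IsRiccatiSolution K B Q P) {x : ℝ → ι → ℝ}
    (hx : ∀ t, 0 ≤ t → HasDerivAt x ((K - B * Bᵀ * P) *ᵥ x t) t) (hlim : Tendsto x atTop (nhds 0))
    (hint : IntegrableOn (fun t ↦ runningCost Q (x t) (riccatiFeedback B P (x t))) (Set.Ioi 0)) :
    ∫ t in Set.Ioi 0, runningCost Q (x t) (riccatiFeedback B P (x t)) = x 0 ⬝ᵥ P *ᵥ x 0 := by
  have hderiv (t : ℝ) (ht : 0 ≤ t) : HasDerivAt (fun s ↦ -(x s ⬝ᵥ P *ᵥ x s))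
      (runningCost Q (x t) (riccatiFeedback B P (x t))) t := by
    have := h.hasDerivAt_neg_value (sub_mulVec_eq_add_riccatiFeedback K P B (x t) ▸ hx t ht)
    rwa [sub_self, dotProduct_zero, sub_zero] at this
  simpa using integral_Ioi_of_hasDerivAt_of_tendsto' hderiv hint
    (tendsto_dotProduct_mulVec_self P hlim).neg

end IsRiccatiSolution

theorem integrableOn_runningCost_riccatiFeedback (Q P : Matrix ι ι ℝ) (B : Matrix ι κ ℝ)
    {x : ℝ → ι → ℝ} {b : ℝ} (hb : 0 < b) (hcont : ContinuousOn x (Set.Ici 0))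
    (hdecay : x =O[atTop] fun t ↦ Real.exp (-b * t)) :
    IntegrableOn (fun t ↦ runningCost Q (x t) (riccatiFeedback B P (x t))) (Set.Ioi 0) := by
  have hcost : Continuous fun v ↦ runningCost Q v (riccatiFeedback B P v) := by
    unfold runningCost riccatiFeedback
    fun_prop
  have hfeedback : (fun t ↦ riccatiFeedback B P (x t)) =O[atTop] fun t ↦ Real.exp (-b * t) :=
    (isBigO_mulVec Bᵀ (isBigO_mulVec P hdecay)).neg_left
  refine integrable_of_isBigO_exp_neg (b := b + b) (by positivity) (hcost.comp_continuousOn hcont)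
    (((isBigO_dotProduct hdecay (isBigO_mulVec Q hdecay)).add
      (isBigO_dotProduct hfeedback hfeedback)).congr_right fun t ↦ ?_)
  rw [← Real.exp_add]
  ring_nf

theorem IsRiccatiSolution.integrableOn_and_integral_eq_of_isHurwitz {n : ℕ}
    {K Q P : Matrix (Fin n) (Fin n) ℝ} {B : Matrix (Fin n) κ ℝ}
    (h : IsRiccatiSolution K B Q P) (hHur : IsHurwitz (K - B * Bᵀ * P))
    {x : ℝ → Fin n → ℝ} (hx : ∀ t, 0 ≤ t → HasDerivAt x ((K - B * Bᵀ * P) *ᵥ x t) t) :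
    IntegrableOn (fun t ↦ runningCost Q (x t) (riccatiFeedback B P (x t))) (Set.Ioi 0) ∧
      ∫ t in Set.Ioi 0, runningCost Q (x t) (riccatiFeedback B P (x t)) = x 0 ⬝ᵥ P *ᵥ x 0 := by
  obtain ⟨b, hb, hdecay⟩ := hHur.exists_isBigO_exp_neg hx
  have hcont : ContinuousOn x (Set.Ici 0) :=
    fun t ht ↦ (hx t ht).continuousAt.continuousWithinAt
  have hlim : Tendsto x atTop (nhds 0) :=
    hdecay.trans_tendsto (Real.tendsto_exp_comp_nhds_zero.2
      (tendsto_id.const_mul_atTop_of_neg (neg_neg_of_pos hb)))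
  have hint := integrableOn_runningCost_riccatiFeedback Q P B hb hcont hdecay
  exact ⟨hint, h.integral_runningCost_riccatiFeedback hx hlim hint⟩

end Riccati

theorem coupled_riccati_nash_equilibrium_general {n : ℕ} {κ_i κ_j : Type*} [Fintype κ_i]
    [Fintype κ_j] {A Q_i Q_j P_i P_j : Matrix (Fin n) (Fin n) ℝ}
    {B_i : Matrix (Fin n) κ_i ℝ} {B_j : Matrix (Fin n) κ_j ℝ}
    (h_i : IsRiccatiSolution (A - B_j * B_jᵀ * P_j) B_i Q_i P_i)
    (h_j : IsRiccatiSolution (A - B_i * B_iᵀ * P_i) B_j Q_j P_j)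
    (hHur : IsHurwitz (A - B_i * B_iᵀ * P_i - B_j * B_jᵀ * P_j)) (x₀ : Fin n → ℝ) :
    (∀ x : ℝ → Fin n → ℝ, x 0 = x₀ →
      (∀ t, 0 ≤ t →
        HasDerivAt x ((A - B_i * B_iᵀ * P_i - B_j * B_jᵀ * P_j) *ᵥ x t) t) →
      (IntegrableOn (fun t ↦ runningCost Q_i (x t) (riccatiFeedback B_i P_i (x t))) (Set.Ioi 0) ∧
        ∫ t in Set.Ioi 0, runningCost Q_i (x t) (riccatiFeedback B_i P_i (x t)) =
          x₀ ⬝ᵥ P_i *ᵥ x₀) ∧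
      (IntegrableOn (fun t ↦ runningCost Q_j (x t) (riccatiFeedback B_j P_j (x t))) (Set.Ioi 0) ∧
        ∫ t in Set.Ioi 0, runningCost Q_j (x t) (riccatiFeedback B_j P_j (x t)) =
          x₀ ⬝ᵥ P_j *ᵥ x₀)) ∧
    (∀ (u : ℝ → κ_i → ℝ) (x : ℝ → Fin n → ℝ), x 0 = x₀ →
      (∀ t, 0 ≤ t →
        HasDerivAt x (A *ᵥ x t + B_i *ᵥ u t + B_j *ᵥ riccatiFeedback B_j P_j (x t)) t) →
      Tendsto x atTop (nhds 0) →
      IntegrableOn (fun t ↦ runningCost Q_i (x t) (u t)) (Set.Ioi 0) →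
      x₀ ⬝ᵥ P_i *ᵥ x₀ ≤ ∫ t in Set.Ioi 0, runningCost Q_i (x t) (u t)) ∧
    (∀ (u : ℝ → κ_j → ℝ) (x : ℝ → Fin n → ℝ), x 0 = x₀ →
      (∀ t, 0 ≤ t →
        HasDerivAt x (A *ᵥ x t + B_j *ᵥ u t + B_i *ᵥ riccatiFeedback B_i P_i (x t)) t) →
      Tendsto x atTop (nhds 0) →
      IntegrableOn (fun t ↦ runningCost Q_j (x t) (u t)) (Set.Ioi 0) →
      x₀ ⬝ᵥ P_j *ᵥ x₀ ≤ ∫ t in Set.Ioi 0, runningCost Q_j (x t) (u t)) := by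
  have closed_loop_comm := sub_right_comm A (B_i * B_iᵀ * P_i) (B_j * B_jᵀ * P_j)
  refine ⟨?_, ?_, ?_⟩
  · rintro x rfl hx
    exact ⟨h_i.integrableOn_and_integral_eq_of_isHurwitz
        (closed_loop_comm ▸ hHur) (closed_loop_comm ▸ hx),
      h_j.integrableOn_and_integral_eq_of_isHurwitz hHur hx⟩
  · rintro u x rfl hx hlim hint
    refine h_i.le_integral_runningCost (fun t ht ↦ ?_) hlim hint
    rw [sub_mulVec_eq_add_riccatiFeedback, add_right_comm]
    exact hx t ht
  · rintro u x rfl hx hlim hint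
    refine h_j.le_integral_runningCost (fun t ht ↦ ?_) hlim hint
    rw [sub_mulVec_eq_add_riccatiFeedback, add_right_comm]
    exact hx t ht

/-- for the two-player linear-quadratic game `ẋ = A x + B_i u_i + B_j u_j`,
`J_k = ∫₀^∞ (xᵀ Q_k x + u_kᵀ u_k)` with `Q_i, Q_j` symmetric positive semidefinite, if
`P_i, P_j` are symmetric solutions of the coupled algebraic Riccati equations and the closed
loop `A − B_i B_iᵀ P_i − B_j B_jᵀ P_j` is Hurwitz, then the feedback policies
`u_k* = −B_kᵀ P_k x` form a Nash equilibrium among asymptotically vanishing responses: along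
the closed-loop trajectory each player's cost equals `x₀ᵀ P_k x₀`, and any unilateral
deviation by player `k` (against `u_{−k}*`) whose trajectory vanishes at infinity with
convergent cost integral has cost at least `x₀ᵀ P_k x₀`. -/
theorem coupled_riccati_nash_equilibrium
    {n m : ℕ} (A : Matrix (Fin n) (Fin n) ℝ)
    (B_i B_j : Matrix (Fin n) (Fin m) ℝ)
    (Q_i Q_j P_i P_j : Matrix (Fin n) (Fin n) ℝ)
    (hQi : Q_i.PosSemidef) (hQj : Q_j.PosSemidef)
    (hPi : P_iᵀ = P_i) (hPj : P_jᵀ = P_j)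
    (hric_i : 0 = (A - B_j * B_jᵀ * P_j)ᵀ * P_i + P_i * (A - B_j * B_jᵀ * P_j)
        - P_i * B_i * B_iᵀ * P_i + Q_i)
    (hric_j : 0 = (A - B_i * B_iᵀ * P_i)ᵀ * P_j + P_j * (A - B_i * B_iᵀ * P_i)
        - P_j * B_j * B_jᵀ * P_j + Q_j)
    (hHur : IsHurwitz (A - B_i * B_iᵀ * P_i - B_j * B_jᵀ * P_j))
    (x₀ : Fin n → ℝ) :
    -- the equilibrium (closed-loop) cost of each player is x₀ᵀ P_k x₀
    (∀ xs : ℝ → Fin n → ℝ, xs 0 = x₀ →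
      (∀ t : ℝ, 0 ≤ t → HasDerivAt xs
        ((A - B_i * B_iᵀ * P_i - B_j * B_jᵀ * P_j).mulVec (xs t)) t) →
      (∫ t in Set.Ioi (0 : ℝ), (xs t ⬝ᵥ Q_i.mulVec (xs t) +
          (-(B_iᵀ.mulVec (P_i.mulVec (xs t)))) ⬝ᵥ (-(B_iᵀ.mulVec (P_i.mulVec (xs t))))))
        = x₀ ⬝ᵥ P_i.mulVec x₀ ∧
      (∫ t in Set.Ioi (0 : ℝ), (xs t ⬝ᵥ Q_j.mulVec (xs t) +
          (-(B_jᵀ.mulVec (P_j.mulVec (xs t)))) ⬝ᵥ (-(B_jᵀ.mulVec (P_j.mulVec (xs t))))))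
        = x₀ ⬝ᵥ P_j.mulVec x₀) ∧
    -- unilateral deviations of player i against u_j* cannot do better
    (∀ (u_i : ℝ → Fin m → ℝ) (x : ℝ → Fin n → ℝ), Continuous u_i → x 0 = x₀ →
      (∀ t : ℝ, 0 ≤ t → HasDerivAt x
        (A.mulVec (x t) + B_i.mulVec (u_i t) +
          B_j.mulVec (-(B_jᵀ.mulVec (P_j.mulVec (x t))))) t) →
      Tendsto x atTop (nhds 0) →
      IntegrableOn (fun t : ℝ => x t ⬝ᵥ Q_i.mulVec (x t) + u_i t ⬝ᵥ u_i t) (Set.Ioi 0) →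
      x₀ ⬝ᵥ P_i.mulVec x₀ ≤
        ∫ t in Set.Ioi (0 : ℝ), (x t ⬝ᵥ Q_i.mulVec (x t) + u_i t ⬝ᵥ u_i t)) ∧
    -- unilateral deviations of player j against u_i* cannot do better
    (∀ (u_j : ℝ → Fin m → ℝ) (x : ℝ → Fin n → ℝ), Continuous u_j → x 0 = x₀ →
      (∀ t : ℝ, 0 ≤ t → HasDerivAt x
        (A.mulVec (x t) + B_j.mulVec (u_j t) +
          B_i.mulVec (-(B_iᵀ.mulVec (P_i.mulVec (x t))))) t) →
      Tendsto x atTop (nhds 0) →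
      IntegrableOn (fun t : ℝ => x t ⬝ᵥ Q_j.mulVec (x t) + u_j t ⬝ᵥ u_j t) (Set.Ioi 0) →
      x₀ ⬝ᵥ P_j.mulVec x₀ ≤
        ∫ t in Set.Ioi (0 : ℝ), (x t ⬝ᵥ Q_j.mulVec (x t) + u_j t ⬝ᵥ u_j t)) := by
  obtain ⟨equilibrium, deviation_i, deviation_j⟩ :=
    coupled_riccati_nash_equilibrium_general ⟨hPi, hric_i⟩ ⟨hPj, hric_j⟩ hHur x₀
  exact ⟨fun xs h0 hx ↦ (equilibrium xs h0 hx).imp And.right And.right,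
    fun u x _ ↦ deviation_i u x, fun u x _ ↦ deviation_j u x⟩
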